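/- Let n ≥ 1, let f_1, …, f_n ∈ L¹([0,1]) be real-valued, and let p ∈ (0,1). Then there exists a Lebesgue-measurable function h : [0,1] → ℂ such that h(x) ∈ {−1, 1} for all x ∈ [0,p), h(x) ∈ {−i, i} for all x ∈ [p,1], h is a step function (piecewise constant on finitely many intervals), and ∫_0^1 f_j(x) h(x) dx = 0 for all 1 ≤ j ≤ n. -/

import Mathlib

/-!
The multiplier comes from one application of the Hobby–Rice theorem on `[0,1]` to the `2n` functions
`f j · 1_{x < p}` and `f j · 1_{p ≤ x}`: a sign function `g` orthogonal to all of them gives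
`h = g` left of `p` and `h = i g` right of `p`.

The Hobby–Rice theorem (`hobby_rice`) is proved by a Borsuk–Ulam argument carried out directly in
the space of sign functions with boundedly many jumps. Overwriting a sign function by `1` on
`(-∞, t)`, with `t` running from `-∞` to `∞`, contracts this space to the constant `1` and creates at
most one new jump. Discretising the contraction and using prism operators on ordered chains modulo
two gives chains `c 0, c 1, …` with `c 0` a point and `∂ c (k+1) = c k + (-1) c k` (`bd_hemi`), whose
simplices have vertices close to each other in a weighted `L¹` sense; `c k` uses at most `k` jumps.

If no sign function with `n` jumps had all `n` integrals below `ε`, labelling each one by the index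
and sign of a large integral would give an antipodal labelling without complementary labels in a
simplex. By Ky Fan's parity identity (`cobd_altInd`) the number of alternating simplices in `c k` is
then odd for every `k ≤ n`, whereas an alternating `n`-simplex needs `n + 1` distinct indices
(`tucker`). So approximate solutions exist for every `ε`, and since sign functions with at most `n`
jumps are sequentially compact for a.e. convergence (`IsSign.compact`), an exact one exists.
-/

open MeasureTheory Complex

namespace HobbyRice

/-! ### Ordered chains modulo two -/

/-- Formal sums modulo two of ordered simplices. A simplex is the list of its vertices;
repeated vertices and the empty simplex are allowed (the complex is augmented). -/
abbrev Chain (V : Type*) := List V →₀ ZMod 2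

variable {V : Type*}

theorem chain_add_self (c : Chain V) : c + c = 0 := by
  ext l
  simpa using CharTwo.add_self_eq_zero (c l)

/-- The chain obtained by prepending the vertex `a` to every simplex. -/
noncomputable def cone (a : V) : Chain V →ₗ[ZMod 2] Chain V :=
  Finsupp.lmapDomain _ _ (List.cons a)

/-- The boundary of a single simplex: the sum of all its facets. -/
noncomputable def bdSimplex : List V → Chain V
  | [] => 0
  | a :: l => Finsupp.single l 1 + cone a (bdSimplex l)

/-- The boundary operator. -/
noncomputable def bd : Chain V →ₗ[ZMod 2] Chain V :=
  Finsupp.linearCombination (ZMod 2) bdSimplex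

/-- The chain map induced by a map of vertices. -/
noncomputable def push (g : V → V) : Chain V →ₗ[ZMod 2] Chain V :=
  Finsupp.lmapDomain _ _ (List.map g)

/-- The prism over a simplex between its images under `g'` and under `g`. -/
noncomputable def prismSimplex (g g' : V → V) : List V → Chain V
  | [] => 0
  | a :: l => Finsupp.single (g a :: g' a :: l.map g') 1 + cone (g a) (prismSimplex g g' l)

/-- The prism operator, a chain homotopy between `push g'` and `push g`. -/
noncomputable def prism (g g' : V → V) : Chain V →ₗ[ZMod 2] Chain V :=
  Finsupp.linearCombination (ZMod 2) (prismSimplex g g')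

@[simp] theorem cone_single (a : V) (l : List V) (r : ZMod 2) :
    cone a (Finsupp.single l r) = Finsupp.single (a :: l) r := by
  simp [cone]

@[simp] theorem bd_single (l : List V) : bd (Finsupp.single l 1) = bdSimplex l := by
  simp [bd]

@[simp] theorem push_single (g : V → V) (l : List V) (r : ZMod 2) :
    push g (Finsupp.single l r) = Finsupp.single (l.map g) r := by
  simp [push]

@[simp] theorem prism_single (g g' : V → V) (l : List V) :
    prism g g' (Finsupp.single l 1) = prismSimplex g g' l := by
  simp [prism]

theorem chain_hom_ext {M : Type*} [AddCommMonoid M] [Module (ZMod 2) M]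
    {A B : Chain V →ₗ[ZMod 2] M}
    (h : ∀ l, A (Finsupp.single l 1) = B (Finsupp.single l 1)) (c : Chain V) : A c = B c := by
  have : A = B := by
    apply Finsupp.lhom_ext'
    intro l
    ext
    simpa using h l
  rw [this]

theorem bd_cone (a : V) (c : Chain V) : bd (cone a c) = c + cone a (bd c) := by
  refine chain_hom_ext (A := bd ∘ₗ cone a) (B := LinearMap.id + cone a ∘ₗ bd) (fun l => ?_) c
  simp [bdSimplex]

theorem push_cone (g : V → V) (a : V) (c : Chain V) :
    push g (cone a c) = cone (g a) (push g c) := by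
  refine chain_hom_ext (A := push g ∘ₗ cone a) (B := cone (g a) ∘ₗ push g) (fun l => ?_) c
  simp

theorem push_push (g g' : V → V) (c : Chain V) : push g (push g' c) = push (g ∘ g') c := by
  refine chain_hom_ext (A := push g ∘ₗ push g') (B := push (g ∘ g')) (fun l => ?_) c
  simp

theorem bd_push (g : V → V) (c : Chain V) : bd (push g c) = push g (bd c) := by
  refine chain_hom_ext (A := bd ∘ₗ push g) (B := push g ∘ₗ bd) (fun l => ?_) c
  induction l with
  | nil => simp [bdSimplex]
  | cons a l ih =>
    simp only [LinearMap.comp_apply, push_single, bd_single] at ih ⊢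
    simp [bdSimplex, push_cone, ih]

theorem prism_cone (g g' : V → V) (a : V) (c : Chain V) :
    prism g g' (cone a c) = cone (g a) (cone (g' a) (push g' c)) + cone (g a) (prism g g' c) := by
  refine chain_hom_ext (A := prism g g' ∘ₗ cone a)
    (B := cone (g a) ∘ₗ cone (g' a) ∘ₗ push g' + cone (g a) ∘ₗ prism g g') (fun l => ?_) c
  simp [prismSimplex]

theorem bd_prism (g g' : V → V) (c : Chain V) :
    bd (prism g g' c) + prism g g' (bd c) = push g' c + push g c := by
  refine chain_hom_ext (A := bd ∘ₗ prism g g' + prism g g' ∘ₗ bd)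
    (B := push g' + push g) (fun l => ?_) c
  induction l with
  | nil => simp [bdSimplex, prismSimplex, chain_add_self]
  | cons a l ih =>
    simp only [LinearMap.add_apply, LinearMap.comp_apply, push_single, bd_single,
      prism_single] at ih ⊢
    have hb : push g' (bdSimplex l) = bdSimplex (l.map g') := by
      have := bd_push g' (Finsupp.single l 1)
      simpa using this.symm
    have ih' := congrArg (cone (g a)) ih
    simp only [map_add, cone_single] at ih'
    simp only [prismSimplex, bdSimplex, map_add, bd_single, bd_cone, prism_single, prism_cone,
      List.map_cons, cone_single, hb]
    have e1 := chain_add_self (prismSimplex g g' l)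
    have e2 := chain_add_self (cone (g a) (cone (g' a) (bdSimplex (l.map g'))))
    have e3 := chain_add_self (Finsupp.single (g a :: l.map g') (1 : ZMod 2))
    linear_combination (norm := abel) ih' + e1 + e2 + e3

/-- Sum of the prisms along a discrete homotopy `G 0, …, G N`. -/
noncomputable def fill (G : ℕ → V → V) (N : ℕ) : Chain V →ₗ[ZMod 2] Chain V :=
  ∑ m ∈ Finset.range N, prism (G m) (G (m + 1))

theorem bd_fill (G : ℕ → V → V) (N : ℕ) (z : Chain V) (hz : bd z = 0) :
    bd (fill G N z) = push (G N) z + push (G 0) z := by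
  induction N with
  | zero => simp [fill, chain_add_self]
  | succ N ih =>
    have h := bd_prism (G N) (G (N + 1)) z
    rw [hz, map_zero, add_zero] at h
    have : fill G (N + 1) z = fill G N z + prism (G N) (G (N + 1)) z := by
      simp [fill, Finset.sum_range_succ]
    rw [this, map_add, ih, h]
    have := chain_add_self (push (G N) z)
    linear_combination (norm := abel) this

/-- Chains of dimension `k`, playing the role of the hemispheres of a `k`-sphere: each is
obtained by contracting the `(k-1)`-sphere formed by its predecessor and the antipode. -/
noncomputable def hemi (σ : V → V) (G : ℕ → V → V) (N : ℕ) (v : V) : ℕ → Chain V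
  | 0 => Finsupp.single [v] 1
  | k + 1 => fill G N (hemi σ G N v k + push σ (hemi σ G N v k))

/-- The contraction ends at a constant map, which sends a simplex and its antipode to the same
degenerate simplex; these cancel modulo two. -/
theorem bd_hemi (σ : V → V) (hσ : ∀ v, σ (σ v) = v) (G : ℕ → V → V) (N : ℕ) (v : V)
    (h0 : ∀ u, G 0 u = u) (hN : ∀ u, G N u = v) (k : ℕ) :
    bd (hemi σ G N v (k + 1)) = hemi σ G N v k + push σ (hemi σ G N v k) := by
  have hid : ∀ c : Chain V, push (G 0) c = c := fun c => by
    refine chain_hom_ext (A := push (G 0)) (B := LinearMap.id) (fun l => ?_) c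
    have : G 0 = id := funext h0
    simp [this]
  have hσσ : ∀ c : Chain V, push σ (push σ c) = c := fun c => by
    refine chain_hom_ext (A := push σ ∘ₗ push σ) (B := LinearMap.id) (fun l => ?_) c
    have : σ ∘ σ = id := funext hσ
    simp [this]
  have hcomp : G N ∘ σ = G N := funext fun u => by simp [hN]
  have key : bd (hemi σ G N v k + push σ (hemi σ G N v k)) = 0 →
      bd (hemi σ G N v (k + 1)) = hemi σ G N v k + push σ (hemi σ G N v k) := by
    intro hz
    rw [hemi, bd_fill _ _ _ hz, hid, map_add, push_push, hcomp, chain_add_self, zero_add]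
  apply key
  cases k with
  | zero => simp [hemi, bdSimplex, chain_add_self]
  | succ k =>
    have ih := bd_hemi σ hσ G N v h0 hN k
    rw [map_add, bd_push, ih, map_add, hσσ, add_comm (push σ _), chain_add_self]

/-! ### Supports -/

/-- The chains all of whose simplices lie in `S`. -/
noncomputable abbrev chainsIn (S : Set (List V)) : Submodule (ZMod 2) (Chain V) :=
  Submodule.span (ZMod 2) ((fun l => Finsupp.single l 1) '' S)

theorem single_mem {S : Set (List V)} {l : List V} (h : l ∈ S) :
    Finsupp.single l 1 ∈ chainsIn S := Submodule.subset_span ⟨l, h, rfl⟩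

theorem map_mem {S T : Set (List V)} (A : Chain V →ₗ[ZMod 2] Chain V)
    (h : ∀ l ∈ S, A (Finsupp.single l 1) ∈ chainsIn T) {c : Chain V} (hc : c ∈ chainsIn S) :
    A c ∈ chainsIn T := by
  have : chainsIn S ≤ (chainsIn T).comap A := by
    rw [Submodule.span_le]
    rintro _ ⟨l, hl, rfl⟩
    exact h l hl
  exact this hc

theorem prismSimplex_mem (g g' : V → V) (l : List V) :
    prismSimplex g g' l ∈ chainsIn {m | m.length = l.length + 1 ∧
      ∀ b ∈ m, ∃ a ∈ l, b = g a ∨ b = g' a} := by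
  induction l with
  | nil => simp [prismSimplex]
  | cons a l ih =>
    refine Submodule.add_mem _ (single_mem ⟨by simp, ?_⟩) (map_mem (cone (g a)) ?_ ih)
    · intro b hb
      simp only [List.mem_cons, List.mem_map] at hb ⊢
      rcases hb with rfl | rfl | ⟨u, hu, rfl⟩
      · exact ⟨a, by simp⟩
      · exact ⟨a, by simp⟩
      · exact ⟨u, by simp [hu]⟩
    · rintro m ⟨hm, hm'⟩
      rw [cone_single]
      refine single_mem ⟨by simp [hm], ?_⟩
      intro b hb
      rcases List.mem_cons.1 hb with rfl | hb
      · exact ⟨a, by simp⟩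
      · obtain ⟨u, hu, h⟩ := hm' b hb
        exact ⟨u, by simp [hu], h⟩

theorem fill_mem {G : ℕ → V → V} {N : ℕ} {S T : Set (List V)}
    (h : ∀ i < N, ∀ l ∈ S, ∀ m : List V, m.length = l.length + 1 →
      (∀ b ∈ m, ∃ a ∈ l, b = G i a ∨ b = G (i + 1) a) → m ∈ T)
    {c : Chain V} (hc : c ∈ chainsIn S) : fill G N c ∈ chainsIn T := by
  refine map_mem _ (fun l hl => ?_) hc
  simp only [fill, LinearMap.sum_apply, prism_single]
  refine Submodule.sum_mem _ fun i hi => ?_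
  refine Submodule.span_mono (Set.image_mono ?_) (prismSimplex_mem _ _ l)
  rintro m ⟨h1, h2⟩
  exact h i (Finset.mem_range.1 hi) l hl m h1 h2

/-! ### Alternating labels -/

/-- The label with the same index and the opposite sign. A natural number `a` encodes the index
`a.div2` together with the sign `a.bodd`. -/
def flip (a : ℕ) : ℕ := Nat.bit (!a.bodd) a.div2

/-- The indices in the list are strictly increasing and the signs alternate, starting with `s`. -/
def Alt : Bool → List ℕ → Prop
  | _, [] => True
  | s, a :: l => a.bodd = s ∧ (∀ b ∈ l, a.div2 < b.div2) ∧ Alt (!s) l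

open Classical in
/-- Indicator modulo two of the lists of labels which can be ordered so as to be alternating. -/
noncomputable def altInd (s : Bool) (l : List ℕ) : ZMod 2 :=
  if ∃ m, m.Perm l ∧ Alt s m then 1 else 0

/-- The coboundary of a function of simplices: the sum of its values on all facets. -/
def cobd {W : Type*} (φ : List W → ZMod 2) : List W → ZMod 2
  | [] => 0
  | a :: l => φ l + cobd (fun m => φ (a :: m)) l

theorem cobd_perm {W : Type*} {l l' : List W} (h : l.Perm l') :
    ∀ φ : List W → ZMod 2, (∀ m m' : List W, m.Perm m' → φ m = φ m') →
      cobd φ l = cobd φ l' := by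
  induction h with
  | nil => intros; rfl
  | cons a h ih =>
    intro φ hφ
    simp only [cobd]
    rw [hφ _ _ h, ih _ (fun m m' hm => hφ _ _ (hm.cons a))]
  | swap a b l =>
    intro φ hφ
    simp only [cobd]
    have : (fun m => φ (a :: b :: m)) = fun m => φ (b :: a :: m) :=
      funext fun m => hφ _ _ (List.Perm.swap ..)
    rw [this]; ring
  | trans _ _ ih1 ih2 => intro φ hφ; rw [ih1 φ hφ, ih2 φ hφ]

theorem cobd_congr {W : Type*} (l : List W) : ∀ φ ψ : List W → ZMod 2,
    (∀ m, m.Sublist l → φ m = ψ m) → cobd φ l = cobd ψ l := by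
  induction l with
  | nil => intros; rfl
  | cons a l ih =>
    intro φ ψ h
    simp only [cobd]
    rw [h l (List.sublist_cons_self a l), ih _ _ (fun m hm => h _ (hm.cons_cons a))]

theorem cobd_zero {W : Type*} (l : List W) : cobd (fun _ : List W => (0 : ZMod 2)) l = 0 := by
  induction l with
  | nil => rfl
  | cons a l ih => simp [cobd, ih]

theorem cobd_map {W : Type*} (f : V → W) (φ : List W → ZMod 2) (l : List V) :
    cobd (fun m : List V => φ (m.map f)) l = cobd φ (l.map f) := by
  induction l generalizing φ with
  | nil => rfl
  | cons a l ih => simp only [cobd, List.map_cons]; rw [← ih]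

theorem altInd_perm (s : Bool) (m m' : List ℕ) (h : m.Perm m') : altInd s m = altInd s m' := by
  have : (∃ q : List ℕ, q.Perm m ∧ Alt s q) ↔ ∃ q : List ℕ, q.Perm m' ∧ Alt s q :=
    ⟨fun ⟨q, h1, h2⟩ => ⟨q, h1.trans h, h2⟩, fun ⟨q, h1, h2⟩ => ⟨q, h1.trans h.symm, h2⟩⟩
  classical
  unfold altInd
  exact if_congr this rfl rfl

theorem flip_flip (a : ℕ) : flip (flip a) = a := by
  simp [flip, Nat.bodd_bit, Nat.div2_bit, Nat.bit_bodd_div2]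

theorem Alt.flip {s : Bool} {l : List ℕ} (h : Alt s l) : Alt (!s) (l.map flip) := by
  induction l generalizing s with
  | nil => trivial
  | cons a l ih =>
    obtain ⟨h1, h2, h3⟩ := h
    refine ⟨by simp [HobbyRice.flip, Nat.bodd_bit, h1], ?_, ih h3⟩
    intro b hb
    obtain ⟨c, hc, rfl⟩ := List.mem_map.1 hb
    simpa [HobbyRice.flip, Nat.div2_bit] using h2 c hc

theorem altInd_flip (s : Bool) (l : List ℕ) : altInd s (l.map flip) = altInd (!s) l := by
  have hff : ∀ l : List ℕ, (l.map flip).map flip = l := fun l => by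
    rw [List.map_map]
    exact (List.map_congr_left fun a _ => flip_flip a).trans (List.map_id l)
  have : (∃ q : List ℕ, q.Perm (l.map flip) ∧ Alt s q) ↔ ∃ q : List ℕ, q.Perm l ∧ Alt (!s) q := by
    constructor
    · rintro ⟨q, h1, h2⟩
      exact ⟨q.map flip, by simpa [hff] using h1.map flip, h2.flip⟩
    · rintro ⟨q, h1, h2⟩
      exact ⟨q.map flip, h1.map flip, by simpa using h2.flip⟩
  classical
  unfold altInd
  exact if_congr this rfl rfl

theorem lt_of_div2_lt {a b : ℕ} (h : a.div2 < b.div2) : a < b := by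
  rw [Nat.div2_val, Nat.div2_val] at h; omega

theorem Alt.pairwise {s : Bool} {l : List ℕ} (h : Alt s l) :
    l.Pairwise (fun a b => a.div2 < b.div2) := by
  induction l generalizing s with
  | nil => simp
  | cons a l ih => exact List.pairwise_cons.2 ⟨h.2.1, ih h.2.2⟩

open Classical in
theorem altInd_sorted {l : List ℕ} (hl : l.Pairwise (· ≤ ·)) (s : Bool) :
    altInd s l = if Alt s l then 1 else 0 := by
  have : (∃ q : List ℕ, q.Perm l ∧ Alt s q) ↔ Alt s l := by
    refine ⟨?_, fun h => ⟨l, List.Perm.refl _, h⟩⟩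
    rintro ⟨q, h1, h2⟩
    have hq : q.Pairwise (· ≤ ·) := h2.pairwise.imp fun h => (lt_of_div2_lt h).le
    have : q = l := h1.eq_of_pairwise (fun a b _ _ h h' => le_antisymm h h') hq hl
    exact this ▸ h2
  simp only [altInd, this]

open Classical in
theorem cobd_alt_sorted (l : List ℕ) (hl : l.Pairwise (· ≤ ·))
    (hc : ∀ a ∈ l, ∀ b ∈ l, a.div2 = b.div2 → a = b) (s : Bool) :
    cobd (fun m => if Alt s m then (1 : ZMod 2) else 0) l =
      (if Alt s l then 1 else 0) + (if Alt (!s) l then 1 else 0) := by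
  induction l generalizing s with
  | nil => simp only [cobd, Alt]; exact (CharTwo.add_self_eq_zero _).symm
  | cons a l ih =>
    have hl' := (List.pairwise_cons.1 hl).2
    have hal := (List.pairwise_cons.1 hl).1
    have hc' : ∀ a ∈ l, ∀ b ∈ l, a.div2 = b.div2 → a = b :=
      fun x hx y hy => hc x (by simp [hx]) y (by simp [hy])
    by_cases hlt : ∀ b ∈ l, a.div2 < b.div2
    · have e : cobd (fun m => if Alt s (a :: m) then (1 : ZMod 2) else 0) l =
          cobd (fun m => if a.bodd = s ∧ Alt (!s) m then (1 : ZMod 2) else 0) l := by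
        apply cobd_congr
        intro m hm
        have : ∀ b ∈ m, a.div2 < b.div2 := fun b hb => hlt b (hm.subset hb)
        have h2 : Alt s (a :: m) ↔ a.bodd = s ∧ Alt (!s) m := by
          simp only [Alt]; tauto
        simp only [h2]
      have h2 : ∀ s, Alt s (a :: l) ↔ a.bodd = s ∧ Alt (!s) l := by
        intro s; simp only [Alt]; tauto
      simp only [cobd, e, h2]
      by_cases hs : a.bodd = s
      · have hs' : ¬ a.bodd = !s := by rw [hs]; cases s <;> decide
        simp only [hs, true_and, ih hl' hc', Bool.not_not]
        have : ¬ s = !s := by cases s <;> decide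
        simp only [this, false_and, if_false, add_zero]
        have := CharTwo.add_self_eq_zero (if Alt s l then (1 : ZMod 2) else 0)
        linear_combination this
      · have hs' : a.bodd = !s := by revert hs; cases a.bodd <;> cases s <;> decide
        have hs'' : ¬ (!s) = s := by cases s <;> decide
        simp only [hs'', false_and, if_false, cobd_zero, hs', true_and, Bool.not_not]
        ring
    · push Not at hlt
      obtain ⟨b, hb, hba⟩ := hlt
      -- A repeated label: the list starts with `a, a`, and the two facets omitting one of
      -- these copies cancel while every other facet still contains both.
      cases l with
      | nil => simp at hb
      | cons b' l =>
        have h1 : a ≤ b' := hal b' (by simp)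
        have h2 : b' ≤ b := by
          rcases List.mem_cons.1 hb with rfl | h
          · exact le_rfl
          · exact (List.pairwise_cons.1 hl').1 b h
        have h3 : a.div2 = b'.div2 := by
          rw [Nat.div2_val, Nat.div2_val] at *; omega
        obtain rfl : a = b' := hc a (by simp) b' (by simp) h3
        have h4 : ∀ s m, ¬ Alt s (a :: a :: m) := by
          intro s m h
          exact lt_irrefl _ (h.2.1 a (by simp))
        simp only [cobd, h4, if_false, cobd_zero, add_zero]
        exact CharTwo.add_self_eq_zero _

/-- Ky Fan's local parity identity: in a simplex without complementary labels, the number of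
alternating facets of first sign `s` is odd exactly when the whole simplex is alternating, with
either first sign. -/
theorem cobd_altInd (l : List ℕ) (hc : ∀ a ∈ l, ∀ b ∈ l, a.div2 = b.div2 → a = b) (s : Bool) :
    cobd (altInd s) l = altInd s l + altInd (!s) l := by
  classical
  have hp : (l.insertionSort (· ≤ ·)).Perm l := List.perm_insertionSort _ l
  have hs : (l.insertionSort (· ≤ ·)).Pairwise (· ≤ ·) := List.pairwise_insertionSort _ l
  rw [← cobd_perm hp _ (altInd_perm s), ← altInd_perm s _ _ hp, ← altInd_perm (!s) _ _ hp,
    altInd_sorted hs, altInd_sorted hs, ← cobd_alt_sorted _ hs _ s]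
  · apply cobd_congr
    intro m hm
    exact altInd_sorted (hs.sublist hm) s
  · intro a ha b hb
    exact hc a (hp.mem_iff.1 ha) b (hp.mem_iff.1 hb)

theorem altInd_eq_zero {n : ℕ} {l : List ℕ} (hl : ∀ a ∈ l, a.div2 < n) (hn : n < l.length)
    (s : Bool) : altInd s l = 0 := by
  unfold altInd
  rw [if_neg]
  rintro ⟨q, h1, h2⟩
  have hnd : (q.map Nat.div2).Nodup := by
    refine List.pairwise_map.2 (h2.pairwise.imp fun h => h.ne)
  have hsub : (q.map Nat.div2) ⊆ List.range n := by
    intro x hx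
    obtain ⟨a, ha, rfl⟩ := List.mem_map.1 hx
    exact List.mem_range.2 (hl a (h1.mem_iff.1 ha))
  have := (hnd.subperm hsub).length_le
  simp [h1.length_eq] at this
  omega

theorem altInd_singleton (a : ℕ) : altInd true [a] + altInd false [a] = 1 := by
  classical
  rw [altInd_sorted (by simp), altInd_sorted (by simp)]
  cases h : a.bodd <;> simp [Alt, h]

/-- Evaluation of a function of simplices on a chain. -/
noncomputable def eval (φ : List V → ZMod 2) : Chain V →ₗ[ZMod 2] ZMod 2 :=
  Finsupp.linearCombination (ZMod 2) φ

@[simp] theorem eval_single (φ : List V → ZMod 2) (l : List V) :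
    eval φ (Finsupp.single l 1) = φ l := by simp [eval]

theorem eval_cone (φ : List V → ZMod 2) (a : V) (c : Chain V) :
    eval φ (cone a c) = eval (fun m => φ (a :: m)) c := by
  refine chain_hom_ext (A := eval φ ∘ₗ cone a) (B := eval (fun m => φ (a :: m))) (fun l => ?_) c
  simp

theorem eval_bd (φ : List V → ZMod 2) (c : Chain V) : eval φ (bd c) = eval (cobd φ) c := by
  refine chain_hom_ext (A := eval φ ∘ₗ bd) (B := eval (cobd φ)) (fun l => ?_) c
  simp only [LinearMap.comp_apply, bd_single, eval_single]
  induction l generalizing φ with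
  | nil => simp [bdSimplex, cobd]
  | cons a l ih => simp [bdSimplex, cobd, eval_cone, ih]

theorem eval_congr {S : Set (List V)} {A B : Chain V →ₗ[ZMod 2] ZMod 2}
    (h : ∀ l ∈ S, A (Finsupp.single l 1) = B (Finsupp.single l 1)) {c : Chain V}
    (hc : c ∈ chainsIn S) : A c = B c := by
  refine LinearMap.eqOn_span (s := (fun l => Finsupp.single l 1) '' S) ?_ hc
  rintro _ ⟨l, hl, rfl⟩
  exact h l hl

/-- Tucker's lemma for a sequence of hemispherical chains: an antipodal labelling with `n` indices
has a complementary pair of labels in some simplex of dimension at most `n`. -/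
theorem tucker (σ : V → V) (lab : V → ℕ) (n : ℕ) (c : ℕ → Chain V) (S : ℕ → Set (List V)) (v : V)
    (h0 : c 0 = Finsupp.single [v] 1)
    (hbd : ∀ k, bd (c (k + 1)) = c k + push σ (c k))
    (hS : ∀ k, c k ∈ chainsIn (S k))
    (hlen : ∀ l ∈ S n, l.length = n + 1)
    (hflip : ∀ k ≤ n, ∀ l ∈ S k, ∀ a ∈ l, lab (σ a) = flip (lab a))
    (hlt : ∀ l ∈ S n, ∀ a ∈ l, (lab a).div2 < n)
    (hcompl : ∀ k ≤ n, ∀ l ∈ S k, ∀ a ∈ l, ∀ b ∈ l, (lab a).div2 = (lab b).div2 →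
      lab a = lab b) : False := by
  have key : ∀ k ≤ n, (eval (fun l => altInd true (l.map lab)) +
      eval (fun l => altInd false (l.map lab))) (c k) = 1 := by
    intro k
    induction k with
    | zero => intro _; simpa [h0] using altInd_singleton (lab v)
    | succ k ih =>
      intro hk
      rw [← ih (by omega)]
      have e1 : (eval (fun l => altInd true (l.map lab)) +
          eval (fun l => altInd false (l.map lab))) (c (k + 1)) =
          eval (fun l => altInd true (l.map lab)) (bd (c (k + 1))) := by
        rw [eval_bd]
        refine eval_congr (fun l hl => ?_) (hS (k + 1))
        simp only [LinearMap.add_apply, eval_single]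
        rw [cobd_map lab (altInd true), cobd_altInd]
        · rfl
        · intro a ha b hb
          obtain ⟨x, hx, rfl⟩ := List.mem_map.1 ha
          obtain ⟨y, hy, rfl⟩ := List.mem_map.1 hb
          exact hcompl _ hk l hl x hx y hy
      rw [e1, hbd, map_add, LinearMap.add_apply]
      congr 1
      refine eval_congr (A := eval (fun l => altInd true (l.map lab)) ∘ₗ push σ)
        (fun l hl => ?_) (hS k)
      simp only [LinearMap.comp_apply, push_single, eval_single]
      rw [show false = !true from rfl, ← altInd_flip true]
      congr 1
      rw [List.map_map, List.map_map]
      exact List.map_congr_left fun a ha => hflip k (by omega) l hl a ha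
  have h1 := key n le_rfl
  have h2 : (eval (fun l => altInd true (l.map lab)) +
      eval (fun l => altInd false (l.map lab))) (c n) = (0 : Chain V →ₗ[ZMod 2] ZMod 2) (c n) := by
    refine eval_congr (fun l hl => ?_) (hS n)
    have : ∀ s, altInd s (l.map lab) = 0 := by
      intro s
      refine altInd_eq_zero (n := n) ?_ (by simp [hlen l hl]) s
      intro a ha
      obtain ⟨x, hx, rfl⟩ := List.mem_map.1 ha
      exact hlt l hl x hx
    simp [this]
  rw [h1] at h2
  simp at h2


/-! ### Step functions with boundedly many jumps -/

/-- The function `h` with its values left of `t` replaced by `1`. As `t` runs from `⊥` to `⊤` this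
contracts the space of sign functions to the constant `1`. -/
noncomputable def overwrite (t : EReal) (h : ℝ → ℝ) : ℝ → ℝ :=
  fun x => if (x : EReal) < t then 1 else h x

/-- Sign functions obtained from `±1` by `k` successive overwritings and sign changes; they have
at most `k` jumps. -/
def IsSign : ℕ → (ℝ → ℝ) → Prop
  | 0, h => h = 1 ∨ h = -1
  | k + 1, h => ∃ t g, IsSign k g ∧ (h = overwrite t g ∨ h = -overwrite t g)

theorem IsSign.neg {k : ℕ} {h : ℝ → ℝ} (hh : IsSign k h) : IsSign k (-h) := by
  cases k with
  | zero => rcases hh with rfl | rfl <;> simp [IsSign]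
  | succ k =>
    obtain ⟨t, g, hg, rfl | rfl⟩ := hh
    · exact ⟨t, g, hg, Or.inr rfl⟩
    · exact ⟨t, g, hg, Or.inl (neg_neg _)⟩

theorem IsSign.overwrite {k : ℕ} {h : ℝ → ℝ} (hh : IsSign k h) (t : EReal) :
    IsSign (k + 1) (overwrite t h) := ⟨t, h, hh, Or.inl rfl⟩

theorem overwrite_bot (h : ℝ → ℝ) : overwrite ⊥ h = h := by
  ext x; simp [overwrite]

theorem overwrite_top (h : ℝ → ℝ) : overwrite ⊤ h = 1 := by
  ext x; simp [overwrite, EReal.coe_lt_top]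

theorem IsSign.mono {k n : ℕ} (hkn : k ≤ n) {h : ℝ → ℝ} (hh : IsSign k h) : IsSign n h := by
  induction n, hkn using Nat.le_induction with
  | base => exact hh
  | succ n _ ih => exact ⟨⊥, h, ih, Or.inl (overwrite_bot h).symm⟩

theorem IsSign.measurable {k : ℕ} {h : ℝ → ℝ} (hh : IsSign k h) : Measurable h := by
  induction k generalizing h with
  | zero => rcases hh with rfl | rfl <;> fun_prop
  | succ k ih =>
    obtain ⟨t, g, hg, hh⟩ := hh
    have : Measurable (HobbyRice.overwrite t g) :=
      Measurable.ite (measurableSet_lt measurable_coe_real_ereal measurable_const)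
        measurable_const (ih hg)
    rcases hh with rfl | rfl
    · exact this
    · exact this.neg

theorem IsSign.values {k : ℕ} {h : ℝ → ℝ} (hh : IsSign k h) (x : ℝ) : h x = 1 ∨ h x = -1 := by
  induction k generalizing h with
  | zero => rcases hh with rfl | rfl <;> simp
  | succ k ih =>
    obtain ⟨t, g, hg, hh⟩ := hh
    have : HobbyRice.overwrite t g x = 1 ∨ HobbyRice.overwrite t g x = -1 := by
      unfold HobbyRice.overwrite
      split_ifs
      · exact Or.inl rfl
      · exact ih hg
    rcases hh with rfl | rfl
    · exact this
    · rcases this with h | h <;> simp [h]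

theorem IsSign.norm_le {k : ℕ} {h : ℝ → ℝ} (hh : IsSign k h) (x : ℝ) : ‖h x‖ ≤ 1 := by
  rcases hh.values x with h | h <;> simp [h]

/-- A sign function jumps only at finitely many points. -/
theorem IsSign.jumps {k : ℕ} {h : ℝ → ℝ} (hh : IsSign k h) :
    ∃ T : Finset ℝ, ∀ x y, x ≤ y → (∀ t ∈ T, x < t → ¬ t ≤ y) → h x = h y := by
  induction k generalizing h with
  | zero => exact ⟨∅, by rcases hh with rfl | rfl <;> simp⟩
  | succ k ih =>
    obtain ⟨t, g, hg, hh⟩ := hh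
    obtain ⟨T, hT⟩ := ih hg
    have : ∀ x y, x ≤ y → (∀ s ∈ insert t.toReal T, x < s → ¬ s ≤ y) →
        HobbyRice.overwrite t g x = HobbyRice.overwrite t g y := by
      intro x y hxy hs
      have e := hT x y hxy fun s hs' => hs s (by simp [hs'])
      have h0 := hs t.toReal (by simp)
      unfold HobbyRice.overwrite
      by_cases hx : (x : EReal) < t
      · by_cases hy : (y : EReal) < t
        · simp [hx, hy]
        · exfalso
          have hy' : t ≤ (y : EReal) := not_lt.1 hy
          have h1 : t ≠ ⊥ := fun h => by simp [h] at hx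
          have h2 : t ≠ ⊤ := fun h => by simp [h] at hy'
          rw [← EReal.coe_toReal h2 h1] at hx hy'
          exact h0 (EReal.coe_lt_coe_iff.1 hx) (EReal.coe_le_coe_iff.1 hy')
      · have hy : ¬ (y : EReal) < t :=
          fun h => hx (lt_of_le_of_lt (EReal.coe_le_coe_iff.2 hxy) h)
        simp [hx, hy, e]
    refine ⟨insert t.toReal T, fun x y hxy hs => ?_⟩
    rcases hh with rfl | rfl
    · exact this x y hxy hs
    · simp [this x y hxy hs]

theorem exists_subseq_or {A B : ℕ → Prop} (h : ∀ j, A j ∨ B j) :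
    ∃ φ : ℕ → ℕ, StrictMono φ ∧ ((∀ j, A (φ j)) ∨ ∀ j, B (φ j)) := by
  by_cases hA : ∃ᶠ j in Filter.atTop, A j
  · obtain ⟨φ, h1, h2⟩ := Filter.extraction_of_frequently_atTop hA
    exact ⟨φ, h1, Or.inl h2⟩
  · have hB : ∃ᶠ j in Filter.atTop, B j := by
      refine Filter.Eventually.frequently ?_
      filter_upwards [Filter.not_frequently.1 hA] with j hj
      exact (h j).resolve_left hj
    obtain ⟨φ, h1, h2⟩ := Filter.extraction_of_frequently_atTop hB
    exact ⟨φ, h1, Or.inr h2⟩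

/-- Sequential compactness under almost everywhere convergence. -/
theorem IsSign.compact {k : ℕ} (h : ℕ → ℝ → ℝ) (hh : ∀ j, IsSign k (h j)) :
    ∃ φ : ℕ → ℕ, StrictMono φ ∧ ∃ g, IsSign k g ∧
      ∀ᵐ x, Filter.Tendsto (fun j => h (φ j) x) Filter.atTop (nhds (g x)) := by
  induction k generalizing h with
  | zero =>
    obtain ⟨φ, hφ, h1 | h1⟩ := exists_subseq_or hh
    · exact ⟨φ, hφ, 1, Or.inl rfl, by simp [h1]⟩
    · exact ⟨φ, hφ, -1, Or.inr rfl, by simp [h1]⟩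
  | succ k ih =>
    choose t g hg hor using hh
    obtain ⟨φ₁, hφ₁, g', hg', hlim⟩ := ih g hg
    obtain ⟨t', φ₂, hφ₂, ht'⟩ := CompactSpace.tendsto_subseq (fun j => t (φ₁ j))
    obtain ⟨φ₃, hφ₃, hor'⟩ := exists_subseq_or (fun j => hor (φ₁ (φ₂ j)))
    have hnull : ∀ᵐ x : ℝ, x ≠ t'.toReal := by
      simp [ae_iff]
    have key : ∀ᵐ x, Filter.Tendsto
        (fun j => HobbyRice.overwrite (t (φ₁ (φ₂ (φ₃ j)))) (g (φ₁ (φ₂ (φ₃ j)))) x)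
        Filter.atTop (nhds (HobbyRice.overwrite t' g' x)) := by
      filter_upwards [hlim, hnull] with x hx hxt
      have ht'' : Filter.Tendsto (fun j => t (φ₁ (φ₂ (φ₃ j)))) Filter.atTop (nhds t') :=
        ht'.comp hφ₃.tendsto_atTop
      have hx' := hx.comp (hφ₂.comp hφ₃).tendsto_atTop
      unfold HobbyRice.overwrite
      have hne : (x : EReal) ≠ t' := by
        rintro rfl; exact hxt (EReal.toReal_coe x).symm
      rcases lt_or_gt_of_ne hne with hlt | hgt
      · rw [if_pos hlt]
        refine tendsto_const_nhds.congr' ?_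
        filter_upwards [ht''.eventually (lt_mem_nhds hlt)] with j hj
        rw [if_pos hj]
      · rw [if_neg hgt.not_gt]
        refine hx'.congr' ?_
        filter_upwards [ht''.eventually (gt_mem_nhds hgt)] with j hj
        rw [if_neg hj.not_gt]; rfl
    have hφ : StrictMono (fun j => φ₁ (φ₂ (φ₃ j))) := hφ₁.comp (hφ₂.comp hφ₃)
    rcases hor' with h1 | h1
    · refine ⟨_, hφ, HobbyRice.overwrite t' g', ⟨t', g', hg', Or.inl rfl⟩, ?_⟩
      filter_upwards [key] with x hx
      simpa only [h1] using hx
    · refine ⟨_, hφ, -HobbyRice.overwrite t' g', ⟨t', g', hg', Or.inr rfl⟩, ?_⟩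
      filter_upwards [key] with x hx
      simpa only [h1, Pi.neg_apply] using hx.neg

/-! ### Approximate and exact solutions -/

/-- Lebesgue measure on the unit interval. -/
noncomputable abbrev unitMeasure : Measure ℝ := volume.restrict (Set.Ioc 0 1)

/-- A finite subdivision of the line into parts of small mass. -/
theorem exists_grid (w : ℝ → ENNReal) (hw : ∫⁻ x, w x ∂unitMeasure ≠ ⊤) {δ : ENNReal}
    (hδ : δ ≠ 0) :
    ∃ (N : ℕ) (t : ℕ → EReal), t 0 = ⊥ ∧ t N = ⊤ ∧ ∀ m < N,
      unitMeasure.withDensity w {x : ℝ | ¬ ((x : EReal) < t m ↔ (x : EReal) < t (m + 1))} ≤ δ := by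
  obtain ⟨η, hη, hs⟩ := exists_pos_setLIntegral_lt_of_measure_lt hw hδ
  obtain ⟨M, hM⟩ := ENNReal.exists_inv_nat_lt hη.ne'
  have hM0 : 0 < M := by
    rcases Nat.eq_zero_or_pos M with rfl | h
    · simp at hM
    · exact h
  have hMr : (0 : ℝ) < M := by exact_mod_cast hM0
  refine ⟨M + 2, fun m => if m = 0 then ⊥ else if m ≤ M + 1 then
    (((m - 1 : ℝ) / M : ℝ) : EReal) else ⊤, by simp, by simp, fun m hm => ?_⟩
  set S := {x : ℝ | ¬ ((x : EReal) < (if m = 0 then ⊥ else if m ≤ M + 1 then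
    (((m - 1 : ℝ) / M : ℝ) : EReal) else ⊤) ↔ (x : EReal) < (if m + 1 = 0 then ⊥ else
      if m + 1 ≤ M + 1 then ((((m + 1 : ℕ) - 1 : ℝ) / M : ℝ) : EReal) else ⊤))} with hS
  have hSm : MeasurableSet S := by
    have h : ∀ t : EReal, MeasurableSet {x : ℝ | (x : EReal) < t} :=
      fun t => measurableSet_lt measurable_coe_real_ereal measurable_const
    exact MeasurableSet.compl (MeasurableSet.iff (h _) (h _))
  rw [withDensity_apply _ hSm]
  refine (hs S ?_).le
  refine lt_of_le_of_lt ?_ hM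
  have hsub : S ∩ Set.Ioc 0 1 ⊆ Set.Icc ((m - 1 : ℝ) / M) (m / M) := by
    rintro x ⟨hx, hx0, hx1⟩
    have e : (m + 1 : ℕ) - (1 : ℝ) = m := by push_cast; ring
    simp only [hS, Set.mem_ofPred_eq, e] at hx
    rcases Nat.eq_zero_or_pos m with rfl | hm0
    · have hnl : ¬ x < 0 := by linarith
      simp [hnl] at hx
    · have h1 : m ≤ M + 1 := by omega
      simp only [hm0.ne', if_false, h1, if_true, Nat.succ_ne_zero, EReal.coe_lt_coe_iff] at hx
      by_cases h2 : m ≤ M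
      · have h3 : m + 1 ≤ M + 1 := by omega
        have h4 : ((m : ℝ) - 1) / M ≤ m / M := by gcongr; linarith
        simp only [h3, if_true, EReal.coe_lt_coe_iff] at hx
        constructor
        · by_contra hc
          push Not at hc
          exact hx ⟨fun _ => lt_of_lt_of_le hc h4, fun _ => hc⟩
        · by_contra hc
          push Not at hc
          exact hx ⟨fun h => by linarith, fun h => by linarith⟩
      · have h3 : ¬ m + 1 ≤ M + 1 := by omega
        have h5 : m = M + 1 := by omega
        simp only [h3, if_false, EReal.coe_lt_top, iff_true, not_lt] at hx
        refine ⟨hx, hx1.trans ?_⟩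
        rw [le_div_iff₀ hMr, h5]; push_cast; linarith
  rw [Measure.restrict_apply hSm]
  refine (measure_mono hsub).trans ?_
  rw [Real.volume_Icc]
  have : (m : ℝ) / M - (m - 1) / M = (M : ℝ)⁻¹ := by field_simp; ring
  rw [this, ENNReal.ofReal_inv_of_pos hMr, ENNReal.ofReal_natCast]

theorem integrable_mul_sign {f : ℝ → ℝ} {μ : Measure ℝ} (hf : Integrable f μ) {k : ℕ} {h : ℝ → ℝ}
    (hh : IsSign k h) : Integrable (fun x => f x * h x) μ :=
  hf.mul_bdd (c := 1) hh.measurable.aestronglyMeasurable (Filter.Eventually.of_forall hh.norm_le)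

theorem enorm_integral_sub_le {f : ℝ → ℝ} (hf : Integrable f unitMeasure) {w : ℝ → ENNReal}
    (hw : ∀ x, ‖f x‖ₑ ≤ w x) {k : ℕ} {a b : ℝ → ℝ} (ha : IsSign k a) (hb : IsSign k b) :
    ‖(∫ x, f x * a x ∂unitMeasure) - ∫ x, f x * b x ∂unitMeasure‖ₑ ≤
      2 * unitMeasure.withDensity w {x | a x ≠ b x} := by
  have hS : MeasurableSet {x | a x ≠ b x} :=
    (measurableSet_eq_fun ha.measurable hb.measurable).compl
  rw [← integral_sub (integrable_mul_sign hf ha) (integrable_mul_sign hf hb),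
    withDensity_apply _ hS, ← lintegral_indicator hS]
  refine (enorm_integral_le_lintegral_enorm _).trans ?_
  rw [← lintegral_const_mul' _ _ (by simp)]
  refine lintegral_mono fun x => ?_
  by_cases hx : a x = b x
  · simp [hx]
  · have : x ∈ {x | a x ≠ b x} := hx
    rw [Set.indicator_of_mem this, ← mul_sub, enorm_mul, mul_comm]
    gcongr
    · have : ‖a x - b x‖ ≤ 2 := by
        have := norm_sub_le (a x) (b x)
        have := ha.norm_le x
        have := hb.norm_le x
        linarith
      rw [← ofReal_norm]
      calc ENNReal.ofReal ‖a x - b x‖ ≤ ENNReal.ofReal 2 := ENNReal.ofReal_le_ofReal this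
        _ = 2 := by simp
    · exact hw x

open Classical in
/-- The index of an entry which is at least `ε`; the junk value `0` if there is none. -/
noncomputable def bigIndex {n : ℕ} (ε : ℝ) (u : Fin n → ℝ) : ℕ :=
  if h : ∃ i, ε ≤ u i then (h.choose : ℕ) else 0

theorem bigIndex_spec {n : ℕ} {ε : ℝ} {u : Fin n → ℝ} (h : ∃ i, ε ≤ u i) :
    ∃ i : Fin n, bigIndex ε u = i ∧ ε ≤ u i :=
  ⟨h.choose, by simp [bigIndex, h], h.choose_spec⟩

/-- If no sign function with at most `n` jumps had all its integrals below `ε`, the labels by large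
integrals would contradict `tucker`: in the simplices of the hemispherical chains the
vertices are close in weighted `L¹`, so no integral changes from `≥ ε` to `≤ -ε`. -/
theorem exists_approx {n : ℕ} (f : Fin n → ℝ → ℝ) (hf : ∀ i, Integrable (f i) unitMeasure)
    {ε : ℝ} (hε : 0 < ε) :
    ∃ h, IsSign n h ∧ ∀ i, |∫ x, f i x * h x ∂unitMeasure| < ε := by
  by_contra hcon
  push Not at hcon
  set w : ℝ → ENNReal := fun x => ∑ i, ‖f i x‖ₑ with hw
  have hwf : ∀ i x, ‖f i x‖ₑ ≤ w x := fun i x =>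
    Finset.single_le_sum (f := fun i => ‖f i x‖ₑ) (fun _ _ => zero_le) (Finset.mem_univ i)
  have hwfin : ∫⁻ x, w x ∂unitMeasure ≠ ⊤ := by
    rw [hw, lintegral_finsetSum' _ fun i _ => (hf i).aestronglyMeasurable.enorm]
    exact (ENNReal.sum_lt_top.2 fun i _ => (hf i).hasFiniteIntegral).ne
  set ν := unitMeasure.withDensity w with hν
  set δ : ENNReal := ENNReal.ofReal (ε / (n + 1)) with hδ
  have hδ0 : δ ≠ 0 := by
    have : 0 < ε / ((n : ℝ) + 1) := by positivity
    simpa [hδ] using this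
  obtain ⟨N, t, ht0, htN, hgrid⟩ := exists_grid w hwfin hδ0
  set J : Fin n → (ℝ → ℝ) → ℝ := fun i h => ∫ x, f i x * h x ∂unitMeasure with hJ
  have hJneg : ∀ i h, J i (-h) = -J i h := fun i h => by
    simp [hJ, integral_neg]
  -- Label `h` by an index `i` with `|J i h| ≥ ε`, the same for `h` and `-h`, and the sign of `J i h`.
  let idx : (ℝ → ℝ) → ℕ := fun h => bigIndex ε fun i => |J i h|
  let val : (ℝ → ℝ) → ℝ := fun h => if hi : idx h < n then J ⟨idx h, hi⟩ h else 0
  let lab : (ℝ → ℝ) → ℕ := fun h => Nat.bit (decide (0 < val h)) (idx h)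
  have hspec : ∀ h, IsSign n h → ∃ i : Fin n, idx h = i ∧ val h = J i h ∧ ε ≤ |J i h| := by
    intro h hh
    obtain ⟨i, hi, hi'⟩ := bigIndex_spec (hcon h hh)
    refine ⟨i, hi, ?_, hi'⟩
    have hi2 : idx h = i := hi
    simp [val, hi2]
  let S : ℕ → Set (List (ℝ → ℝ)) := fun k => {l | l.length = k + 1 ∧ (∀ a ∈ l, IsSign k a) ∧
    ∀ a ∈ l, ∀ b ∈ l, ν {x | a x ≠ b x} ≤ k * δ}
  let G : ℕ → (ℝ → ℝ) → ℝ → ℝ := fun m => overwrite (t m)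
  have hG0 : ∀ u, G 0 u = u := fun u => by simp only [G, ht0, overwrite_bot]
  have hGN : ∀ u, G N u = 1 := fun u => by simp only [G, htN, overwrite_top]
  refine tucker (fun h : ℝ → ℝ => -h) lab n (hemi (fun h => -h) G N 1) S 1 rfl
    (bd_hemi _ neg_neg G N 1 hG0 hGN) ?_ (fun l hl => hl.1) ?_ ?_ ?_
  · intro k
    induction k with
    | zero => exact single_mem ⟨rfl, by simp [IsSign], by simp⟩
    | succ k ih =>
      rw [hemi]
      have hneg : push (fun h : ℝ → ℝ => -h) (hemi (fun h => -h) G N 1 k) ∈ chainsIn (S k) := by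
        refine map_mem _ (fun l hl => ?_) ih
        rw [push_single]
        refine single_mem ⟨by simpa using hl.1, ?_, ?_⟩
        · intro a ha
          obtain ⟨u, hu, rfl⟩ := List.mem_map.1 ha
          exact (hl.2.1 u hu).neg
        · intro a ha b hb
          obtain ⟨u, hu, rfl⟩ := List.mem_map.1 ha
          obtain ⟨v, hv, rfl⟩ := List.mem_map.1 hb
          simpa using hl.2.2 u hu v hv
      refine fill_mem (S := S k) ?_ (Submodule.add_mem _ ih hneg)
      intro i hi l hl m hm hmem
      refine ⟨by rw [hm, hl.1], ?_, ?_⟩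
      · intro b hb
        obtain ⟨a, ha, rfl | rfl⟩ := hmem b hb
        · exact (hl.2.1 a ha).overwrite _
        · exact (hl.2.1 a ha).overwrite _
      · intro b hb b' hb'
        obtain ⟨a, ha, hba⟩ := hmem b hb
        obtain ⟨a', ha', hba'⟩ := hmem b' hb'
        have : {x | b x ≠ b' x} ⊆ {x | a x ≠ a' x} ∪
            {x : ℝ | ¬ ((x : EReal) < t i ↔ (x : EReal) < t (i + 1))} := by
          intro x hx
          by_contra hc
          simp only [Set.mem_union, Set.mem_ofPred_eq, not_or, not_not] at hc
          obtain ⟨hc1, hc2⟩ := hc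
          apply hx
          rcases hba with rfl | rfl <;> rcases hba' with rfl | rfl <;>
            simp only [G, overwrite, hc1, hc2]
        calc ν {x | b x ≠ b' x} ≤ _ := measure_mono this
          _ ≤ _ := measure_union_le _ _
          _ ≤ k * δ + δ := add_le_add (hl.2.2 a ha a' ha') (hgrid i hi)
          _ = ((k + 1 : ℕ) : ENNReal) * δ := by push_cast; ring
  · intro k hk l hl a ha
    have ha' : IsSign n a := (hl.2.1 a ha).mono hk
    obtain ⟨i, hi, hv, hb⟩ := hspec a ha'
    have hidx : idx (-a) = idx a := by simp only [idx, hJneg, abs_neg]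
    have hval : val (-a) = -val a := by
      rw [hv]
      simp [val, hidx, hi, hJneg]
    simp only [lab, flip, Nat.bodd_bit, Nat.div2_bit, hidx, hval]
    congr 1
    rw [hv]
    rcases le_abs.1 hb with h | h
    · have h1 : 0 < J i a := by linarith
      simp [h1, h1.le]
    · have h1 : J i a < 0 := by linarith
      simp [h1, h1.le]
  · intro l hl a ha
    obtain ⟨i, hi, -⟩ := hspec a (hl.2.1 a ha)
    simp only [lab, Nat.div2_bit, hi, i.2]
  · intro k hk l hl a ha b hb hab
    simp only [lab, Nat.div2_bit] at hab
    obtain ⟨i, hi, hv, hbi⟩ := hspec a ((hl.2.1 a ha).mono hk)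
    obtain ⟨j, hj, hvj, hbj⟩ := hspec b ((hl.2.1 b hb).mono hk)
    obtain rfl : i = j := Fin.ext (by rw [← hi, ← hj, hab])
    simp only [lab, hab, hv, hvj]
    congr 1
    have hclose := enorm_integral_sub_le (hf i) (hwf i) (hl.2.1 a ha) (hl.2.1 b hb)
    have h1 : ‖J i a - J i b‖ₑ ≤ 2 * (k * δ) :=
      hclose.trans (mul_le_mul_right (hl.2.2 a ha b hb) 2)
    have h2 : (2 : ENNReal) * (k * δ) = ENNReal.ofReal (2 * (k * (ε / (n + 1)))) := by
      rw [ENNReal.ofReal_mul (by norm_num), ENNReal.ofReal_mul (by positivity),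
        ENNReal.ofReal_natCast, hδ]
      simp
    rw [h2, ← ofReal_norm, ENNReal.ofReal_le_ofReal_iff (by positivity),
      Real.norm_eq_abs] at h1
    have h3 : (k : ℝ) * (ε / (n + 1)) < ε := by
      have : (k : ℝ) ≤ n := by exact_mod_cast hk
      rw [← mul_div_assoc, div_lt_iff₀ (by positivity)]
      nlinarith
    have h4 := abs_le.1 h1
    rw [decide_eq_decide]
    rcases le_abs.1 hbi with h5 | h5 <;> rcases le_abs.1 hbj with h6 | h6 <;>
      constructor <;> intro h7 <;> linarith

/-- The Hobby–Rice theorem on the unit interval. -/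
theorem hobby_rice {n : ℕ} (f : Fin n → ℝ → ℝ) (hf : ∀ i, Integrable (f i) unitMeasure) :
    ∃ h, IsSign n h ∧ ∀ i, ∫ x, f i x * h x ∂unitMeasure = 0 := by
  choose h hs hsmall using fun j : ℕ => exists_approx f hf (Nat.one_div_pos_of_nat (α := ℝ) (n := j))
  obtain ⟨φ, hφ, g, hg, hlim⟩ := IsSign.compact h hs
  refine ⟨g, hg, fun i => ?_⟩
  have h1 : Filter.Tendsto (fun j => ∫ x, f i x * h (φ j) x ∂unitMeasure) Filter.atTop
      (nhds (∫ x, f i x * g x ∂unitMeasure)) := by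
    refine tendsto_integral_of_dominated_convergence (fun x => ‖f i x‖)
      (fun j => (integrable_mul_sign (hf i) (hs _)).aestronglyMeasurable) (hf i).norm ?_ ?_
    · intro j
      filter_upwards with x
      rw [norm_mul]
      exact mul_le_of_le_one_right (norm_nonneg _) ((hs (φ j)).norm_le x)
    · filter_upwards [ae_restrict_of_ae hlim] with x hx
      exact hx.const_mul _
  have h2 : Filter.Tendsto (fun j => ∫ x, f i x * h (φ j) x ∂unitMeasure) Filter.atTop
      (nhds 0) := by
    refine squeeze_zero_norm (fun j => (hsmall (φ j) i).le) ?_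
    exact (tendsto_one_div_add_atTop_nhds_zero_nat (𝕜 := ℝ)).comp hφ.tendsto_atTop
  exact tendsto_nhds_unique h1 h2

/-- The points of `T` in `(0, 1)` and the endpoints `0`, `1` in increasing order cut the unit
interval into pieces none of which contains a point of `T` other than its left endpoint. -/
theorem exists_partition (T : Finset ℝ) : ∃ s : ℕ, ∃ β : ℕ → ℝ, β 0 = 0 ∧ β (s + 1) = 1 ∧
    (∀ m, m ≤ s → β m < β (m + 1)) ∧
    ∀ m, m ≤ s → ∀ x ∈ Set.Ico (β m) (β (m + 1)), ∀ t ∈ T, β m < t → ¬ t ≤ x := by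
  classical
  set U : Finset ℝ := insert 0 (insert 1 (T.filter fun t => 0 < t ∧ t < 1)) with hU
  have hU01 : ∀ u ∈ U, 0 ≤ u ∧ u ≤ 1 := by
    intro u hu
    simp only [hU, Finset.mem_insert, Finset.mem_filter] at hu
    rcases hu with rfl | rfl | ⟨_, h1, h2⟩
    · simp
    · simp
    · exact ⟨h1.le, h2.le⟩
  have h0 : (0 : ℝ) ∈ U := by simp [hU]
  have h1 : (1 : ℝ) ∈ U := by simp [hU]
  have hcard : 1 < U.card := Finset.one_lt_card.2 ⟨0, h0, 1, h1, by norm_num⟩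
  obtain ⟨s, hs⟩ : ∃ s, U.card = s + 2 := ⟨U.card - 2, by omega⟩
  let e := U.orderEmbOfFin hs
  have hmem : ∀ i, e i ∈ U := U.orderEmbOfFin_mem hs
  have hsurj : ∀ u ∈ U, ∃ i, e i = u := by
    intro u hu
    have : u ∈ Set.range e := by rw [Finset.range_orderEmbOfFin]; exact hu
    exact this
  let β : ℕ → ℝ := fun m => if hm : m < s + 2 then e ⟨m, hm⟩ else 0
  have hβ : ∀ m (hm : m < s + 2), β m = e ⟨m, hm⟩ := fun m hm => by simp [β, hm]
  have hlt : ∀ m, m ≤ s → β m < β (m + 1) := by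
    intro m hm
    rw [hβ m (by omega), hβ (m + 1) (by omega)]
    exact e.strictMono (by simp)
  have hβ0 : β 0 = 0 := by
    rw [hβ 0 (by omega)]
    obtain ⟨i, hi⟩ := hsurj 0 h0
    refine le_antisymm ?_ (hU01 _ (hmem _)).1
    rw [← hi]
    exact e.monotone (Fin.mk_le_of_le_val (by simp))
  have hβ1 : β (s + 1) = 1 := by
    rw [hβ (s + 1) (by omega)]
    obtain ⟨i, hi⟩ := hsurj 1 h1
    refine le_antisymm (hU01 _ (hmem _)).2 ?_
    rw [← hi]
    exact e.monotone (Fin.le_def.2 (by have := i.2; simp; omega))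
  refine ⟨s, β, hβ0, hβ1, hlt, ?_⟩
  intro m hm x hx t ht h3 h4
  have hb0 : 0 ≤ β m := by rw [hβ m (by omega)]; exact (hU01 _ (hmem _)).1
  have hb1 : β (m + 1) ≤ 1 := by rw [hβ (m + 1) (by omega)]; exact (hU01 _ (hmem _)).2
  have htU : t ∈ U := by
    simp only [hU, Finset.mem_insert, Finset.mem_filter]
    exact Or.inr (Or.inr ⟨ht, by linarith, by linarith [hx.2]⟩)
  obtain ⟨i, rfl⟩ := hsurj t htU
  have h5 : e i < β (m + 1) := lt_of_le_of_lt h4 hx.2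
  rw [hβ m (by omega)] at h3
  rw [hβ (m + 1) (by omega)] at h5
  have h6 := Fin.lt_def.1 (e.lt_iff_lt.1 h3)
  have h7 := Fin.lt_def.1 (e.lt_iff_lt.1 h5)
  simp only at h6 h7
  omega

end HobbyRice

/-- Combined Hobby–Rice multiplier: there is a measurable step function `h : [0,1] → ℂ`
taking values `±1` on `[0,p)` and `±i` on `[p,1]`, such that `∫_0^1 f_j h = 0` for all
`j`. -/
theorem hobby_rice_combined_multiplier (n : ℕ) (hn : 1 ≤ n) (f : Fin n → ℝ → ℝ)
    (hf : ∀ j, IntegrableOn (f j) (Set.Icc 0 1)) (p : ℝ) (hp : p ∈ Set.Ioo (0:ℝ) 1) :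
    ∃ h : ℝ → ℂ, Measurable h ∧
      (∀ x ∈ Set.Ico (0:ℝ) p, h x = 1 ∨ h x = -1) ∧
      (∀ x ∈ Set.Icc p 1, h x = Complex.I ∨ h x = -Complex.I) ∧
      (∃ s : ℕ, ∃ β : ℕ → ℝ, β 0 = 0 ∧ β (s + 1) = 1 ∧
        (∀ m, m ≤ s → β m < β (m + 1)) ∧
        ∀ m, m ≤ s → ∃ c : ℂ, ∀ x ∈ Set.Ico (β m) (β (m + 1)), h x = c) ∧
      ∀ j, ∫ x in (0:ℝ)..1, (f j x : ℂ) * h x = 0 := by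
  have hf' : ∀ j, Integrable (f j) HobbyRice.unitMeasure :=
    fun j => (hf j).mono_set Set.Ioc_subset_Icc_self
  -- One application to the `2n` restrictions of the `f j` to the two sides of `p`.
  let F : Fin (n + n) → ℝ → ℝ := Fin.append (fun j => (Set.Iio p).indicator (f j))
    (fun j => (Set.Ici p).indicator (f j))
  have hF₁ : ∀ j, F (Fin.castAdd n j) = (Set.Iio p).indicator (f j) :=
    fun j => Fin.append_left _ _ j
  have hF₂ : ∀ j, F (Fin.natAdd n j) = (Set.Ici p).indicator (f j) :=
    fun j => Fin.append_right _ _ j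
  have hF : ∀ i, Integrable (F i) HobbyRice.unitMeasure := by
    intro i
    refine Fin.addCases (fun j => ?_) (fun j => ?_) i
    · rw [hF₁]; exact (hf' j).indicator measurableSet_Iio
    · rw [hF₂]; exact (hf' j).indicator measurableSet_Ici
  obtain ⟨g, hg, horth⟩ := HobbyRice.hobby_rice F hF
  have hv := hg.values
  refine ⟨fun x => if x < p then (g x : ℂ) else Complex.I * g x, ?_, ?_, ?_, ?_, ?_⟩
  · have := hg.measurable
    exact Measurable.ite measurableSet_Iio (by fun_prop) (by fun_prop)
  · intro x hx
    rcases hv x with h | h <;> simp [hx.2, h]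
  · intro x hx
    rcases hv x with h | h <;> simp [hx.1.not_gt, h]
  · obtain ⟨T, hT⟩ := hg.jumps
    obtain ⟨s, β, h0, h1, h2, h3⟩ := HobbyRice.exists_partition (insert p T)
    refine ⟨s, β, h0, h1, h2, fun m hm =>
      ⟨if β m < p then (g (β m) : ℂ) else Complex.I * g (β m), fun x hx => ?_⟩⟩
    have h4 := h3 m hm x hx
    have e : g (β m) = g x := hT _ _ hx.1 fun t ht => h4 t (by simp [ht])
    have hpx : x < p ↔ β m < p :=
      ⟨fun h => lt_of_le_of_lt hx.1 h, fun h => not_le.1 (h4 p (by simp) h)⟩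
    simp only [hpx, e]
  · intro j
    have e : ∀ x, (f j x : ℂ) * (if x < p then (g x : ℂ) else Complex.I * g x) =
        ((F (Fin.castAdd n j) x * g x : ℝ) : ℂ) +
          Complex.I * ((F (Fin.natAdd n j) x * g x : ℝ) : ℂ) := by
      intro x
      rw [hF₁, hF₂]
      by_cases hx : x < p
      · simp [hx]
      · simp [hx, not_lt.1 hx]; ring
    rw [intervalIntegral.integral_of_le zero_le_one]
    simp only [e]
    rw [integral_add, integral_const_mul, integral_complex_ofReal, integral_complex_ofReal,
      horth, horth]
    · simp
    · exact (HobbyRice.integrable_mul_sign (hF _) hg).ofReal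
    · exact (HobbyRice.integrable_mul_sign (hF _) hg).ofReal.const_mul _
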